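/- arXiv:2203.15791 — 2 statements merged into one kernel-verified Lean document; each statement's English description precedes it below -/
import Mathlib

section
/- Let L ≥ 2 be even. With Y'_π = ∏_{j=1}^{L} exp(−i(π/2)Sʸ_j), Z'_π = ∏_{j=1}^{L} exp(−i(π/2)σᶻ_j), and P the projection onto the hole-free subspace, one has P Y'_π U_KT Y'_π U_KT P = (−i)^L · P Z'_π P. -/
noncomputable section
open Complex Matrix

/-- The Hilbert space operators of the `L`-site spin-1 chain: matrices on `(ℂ³)^{⊗L}`,
with the tensor factors indexed by sites and the single-site ordered basis `(|+⟩,|0⟩,|−⟩)`. -/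
abbrev Op (L : ℕ) : Type := Matrix (Fin L → Fin 3) (Fin L → Fin 3) ℂ

/-- The spin-1 matrix `Sˣ`. -/
def Sx : Matrix (Fin 3) (Fin 3) ℂ :=
  ((Real.sqrt 2 : ℝ) : ℂ)⁻¹ • !![0, 1, 0; 1, 0, 1; 0, 1, 0]

/-- The spin-1 matrix `Sʸ`. -/
def Sy : Matrix (Fin 3) (Fin 3) ℂ :=
  ((Real.sqrt 2 : ℝ) : ℂ)⁻¹ • !![0, -I, 0; I, 0, -I; 0, I, 0]

/-- The spin-1 matrix `Sᶻ = diag(1,0,−1)`. -/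
def Sz : Matrix (Fin 3) (Fin 3) ℂ := !![1, 0, 0; 0, 0, 0; 0, 0, -1]

/-- `site A j` is the one-site operator `A` acting on site `j` and identity elsewhere. -/
def site {L : ℕ} (A : Matrix (Fin 3) (Fin 3) ℂ) (j : Fin L) : Op L :=
  Matrix.of fun f g => ∏ k : Fin L, if k = j then A (f k) (g k) else (if f k = g k then 1 else 0)

/-- One factor `exp(iπ Sᶻ_u Sˣ_v)` of the Kennedy–Tasaki transformation. -/
def ktFactor {L : ℕ} (u v : Fin L) : Op L :=
  NormedSpace.exp (((Real.pi : ℂ) * I) • (site Sz u * site Sx v))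

/-- The Kennedy–Tasaki transformation `U_KT = ∏_{1 ≤ u < v ≤ L} exp(iπ Sᶻ_u Sˣ_v)`
(the factors pairwise commute, so the ordering is immaterial). -/
def UKT (L : ℕ) : Op L :=
  ((List.finRange L).map fun u =>
    ((List.finRange L).map fun v => if u < v then ktFactor u v else 1).prod).prod

/-- The p-wave basis vector `|↑⟩ = (|+⟩ − |−⟩)/√2`. -/
def up : Fin 3 → ℂ := ![((Real.sqrt 2 : ℝ) : ℂ)⁻¹, 0, -((Real.sqrt 2 : ℝ) : ℂ)⁻¹]

/-- The p-wave basis vector `|↓⟩ = |0⟩`. -/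
def down : Fin 3 → ℂ := ![0, 1, 0]

/-- The p-wave basis vector `|h⟩ = (|+⟩ + |−⟩)/√2`. -/
def hole : Fin 3 → ℂ := ![((Real.sqrt 2 : ℝ) : ℂ)⁻¹, 0, ((Real.sqrt 2 : ℝ) : ℂ)⁻¹]

/-- The rank-one operator `|a⟩⟨b|`. -/
def ketbra (a b : Fin 3 → ℂ) : Matrix (Fin 3) (Fin 3) ℂ := Matrix.vecMulVec a (star b)

/-- `σˣ = |↑⟩⟨↓| + |↓⟩⟨↑|` (annihilating `|h⟩`). -/
def sigx : Matrix (Fin 3) (Fin 3) ℂ := ketbra up down + ketbra down up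

/-- `σʸ = −i|↑⟩⟨↓| + i|↓⟩⟨↑|` (annihilating `|h⟩`). -/
def sigy : Matrix (Fin 3) (Fin 3) ℂ := (-I) • ketbra up down + I • ketbra down up

/-- `σᶻ = |↑⟩⟨↑| − |↓⟩⟨↓|` (annihilating `|h⟩`). -/
def sigz : Matrix (Fin 3) (Fin 3) ℂ := ketbra up up - ketbra down down

/-- `n = |↑⟩⟨↑| + |↓⟩⟨↓|` (annihilating `|h⟩`). -/
def nMat : Matrix (Fin 3) (Fin 3) ℂ := ketbra up up + ketbra down down

/-- `h = |h⟩⟨h|`. -/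
def hMat : Matrix (Fin 3) (Fin 3) ℂ := ketbra hole hole

/-- `P = ⊗_{j=1}^L n_j`, the orthogonal projection onto the hole-free subspace. -/
def Pproj (L : ℕ) : Op L := Matrix.of fun f g => ∏ k : Fin L, nMat (f k) (g k)

/-- The Heisenberg coupling `S_j · S_k`. -/
def heis {L : ℕ} (j k : Fin L) : Op L :=
  site Sx j * site Sx k + site Sy j * site Sy k + site Sz j * site Sz k

/-- The bilinear-biquadratic Hamiltonian
`H_BLBQ(θ) = Σ_{j=1}^{L−1} [cosθ (S_j·S_{j+1}) + sinθ (S_j·S_{j+1})²]`. -/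
def HBLBQ (L : ℕ) (θ : ℝ) : Op L :=
  ∑ j : Fin L, if h : (j : ℕ) + 1 < L then
    ((Real.cos θ : ℝ) : ℂ) • heis j ⟨(j : ℕ) + 1, h⟩
      + ((Real.sin θ : ℝ) : ℂ) • (heis j ⟨(j : ℕ) + 1, h⟩) ^ 2
  else 0

/-- The self-dual Hamiltonian `H_SD(θ) = H_BLBQ(θ) + U_KT H_BLBQ(θ) U_KT`. -/
def HSD (L : ℕ) (θ : ℝ) : Op L := HBLBQ L θ + UKT L * HBLBQ L θ * UKT L

/-- The spin-1/2 XXZ Hamiltonian written in the p-wave basis: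
`H_XXZ(θ) = (cosθ−sinθ) Σ_j (−σˣ_jσˣ_{j+1} + σʸ_jσʸ_{j+1}) + sinθ Σ_j σᶻ_jσᶻ_{j+1}`. -/
def HXXZ (L : ℕ) (θ : ℝ) : Op L :=
  ((Real.cos θ - Real.sin θ : ℝ) : ℂ) •
    (∑ j : Fin L, if h : (j : ℕ) + 1 < L then
      -(site sigx j * site sigx ⟨(j : ℕ) + 1, h⟩) + site sigy j * site sigy ⟨(j : ℕ) + 1, h⟩
    else 0)
  + ((Real.sin θ : ℝ) : ℂ) •
    (∑ j : Fin L, if h : (j : ℕ) + 1 < L then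
      site sigz j * site sigz ⟨(j : ℕ) + 1, h⟩
    else 0)

/-- The global product `∏_{j=1}^L exp(c • A_j)` of commuting single-site exponentials. -/
def globalProd (L : ℕ) (A : Matrix (Fin 3) (Fin 3) ℂ) (c : ℂ) : Op L :=
  ((List.finRange L).map fun j => NormedSpace.exp (c • site A j)).prod

/-- The symmetry flux `F^y_j = exp(−iπ Σ_{k<j} Sʸ_k) · Sʸ_j`. -/
def fluxY (L : ℕ) (j : Fin L) : Op L :=
  NormedSpace.exp ((-((Real.pi : ℂ) * I)) •
    ∑ k : Fin L, if (k : ℕ) < (j : ℕ) then site Sy k else 0) * site Sy j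


/-- product vector -/
def pv {L : ℕ} (φ : Fin L → Fin 3 → ℂ) : (Fin L → Fin 3) → ℂ := fun f => ∏ k, φ k (f k)

def bv (s : Bool) : Fin 3 → ℂ := if s then up else down

theorem pv_update {L : ℕ} (φ : Fin L → Fin 3 → ℂ) (j : Fin L) (a : Fin 3 → ℂ) (f : Fin L → Fin 3) :
    pv (Function.update φ j a) f = a (f j) * ∏ k ∈ Finset.univ.erase j, φ k (f k) := by
  unfold pv
  rw [← Finset.mul_prod_erase Finset.univ _ (Finset.mem_univ j)]
  congr 1
  · simp
  · apply Finset.prod_congr rfl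
    intro k hk
    rw [Function.update_of_ne (Finset.ne_of_mem_erase hk)]

theorem pv_update_add {L : ℕ} (φ : Fin L → Fin 3 → ℂ) (j : Fin L) (a b : Fin 3 → ℂ) :
    pv (Function.update φ j (a + b)) = pv (Function.update φ j a) + pv (Function.update φ j b) := by
  ext f; simp only [Pi.add_apply, pv_update]; ring

theorem pv_update_smul {L : ℕ} (φ : Fin L → Fin 3 → ℂ) (j : Fin L) (c : ℂ) (a : Fin 3 → ℂ) :
    pv (Function.update φ j (c • a)) = c • pv (Function.update φ j a) := by
  ext f; simp only [Pi.smul_apply, pv_update, smul_eq_mul]; ring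

theorem pv_zero {L : ℕ} (φ : Fin L → Fin 3 → ℂ) (j : Fin L) (h : φ j = 0) : pv φ = 0 := by
  ext f; exact Finset.prod_eq_zero (Finset.mem_univ j) (by simp [h])

theorem site_pv {L : ℕ} (A : Matrix (Fin 3) (Fin 3) ℂ) (j : Fin L) (φ : Fin L → Fin 3 → ℂ) :
    site A j *ᵥ pv φ = pv (Function.update φ j (A *ᵥ φ j)) := by
  ext f
  simp only [Matrix.mulVec, dotProduct, site, Matrix.of_apply, pv, ← Finset.prod_mul_distrib]
  rw [← Fintype.piFinset_univ, ← Finset.prod_univ_sum (fun _ => Finset.univ)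
    (fun k x => (if k = j then A (f k) x else if f k = x then 1 else 0) * φ k x)]
  apply Finset.prod_congr rfl
  intro k _
  by_cases h : k = j
  · subst h; simp [Matrix.mulVec, dotProduct]
  · simp [h]

theorem exp_eig {n : Type*} [Fintype n] [DecidableEq n] (M : Matrix n n ℂ) (v : n → ℂ) (μ : ℂ)
    (h : M *ᵥ v = μ • v) : NormedSpace.exp M *ᵥ v = Complex.exp μ • v := by
  letI : NormedRing (Matrix n n ℂ) := Matrix.linftyOpNormedRing
  letI : NormedAlgebra ℂ (Matrix n n ℂ) := Matrix.linftyOpNormedAlgebra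
  letI : NormedAlgebra ℚ (Matrix n n ℂ) := NormedAlgebra.restrictScalars ℚ ℂ _
  have h1 := NormedSpace.exp_series_hasSum_exp' (𝕂 := ℂ) M
  let F : Matrix n n ℂ →ₗ[ℂ] (n → ℂ) :=
    { toFun := fun N => N *ᵥ v
      map_add' := fun a b => Matrix.add_mulVec a b v
      map_smul' := fun c a => Matrix.smul_mulVec c a v }
  have hF : Continuous F := Continuous.matrix_mulVec continuous_id continuous_const
  have h2 := h1.map F hF
  have h3 := (NormedSpace.exp_series_hasSum_exp' (𝕂 := ℂ) μ).smul_const v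
  have hp : ∀ k : ℕ, (M ^ k) *ᵥ v = μ ^ k • v := by
    intro k
    induction k with
    | zero => simp
    | succ k ih => rw [pow_succ, ← Matrix.mulVec_mulVec, h, Matrix.mulVec_smul, ih, smul_smul, pow_succ']
  have h4 : (F ∘ fun k : ℕ => ((k.factorial : ℂ)⁻¹) • M ^ k) =
      fun k : ℕ => (((k.factorial : ℂ)⁻¹) • μ ^ k) • v := by
    funext k
    change (((k.factorial : ℂ)⁻¹) • M ^ k) *ᵥ v = _
    rw [Matrix.smul_mulVec, hp, smul_smul, smul_eq_mul]
  rw [h4] at h2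
  rw [Complex.exp_eq_exp_ℂ]
  exact h2.unique h3

theorem exp_pi2 {n : Type*} [Fintype n] [DecidableEq n] (M : Matrix n n ℂ) (v w : n → ℂ)
    (h1 : M *ᵥ v = ((Real.pi / 2 : ℝ) : ℂ) • w) (h2 : M *ᵥ w = (-((Real.pi / 2 : ℝ) : ℂ)) • v) :
    NormedSpace.exp M *ᵥ v = w := by
  have e1 := exp_eig M (v - I • w) (((Real.pi / 2 : ℝ) : ℂ) * I) (by
    rw [Matrix.mulVec_sub, Matrix.mulVec_smul, h1, h2]
    ext i; simp only [Pi.sub_apply, Pi.smul_apply, smul_eq_mul]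
    linear_combination (-((Real.pi / 2 : ℝ) : ℂ) * w i) * (-I_mul_I))
  have e2 := exp_eig M (v + I • w) (-((Real.pi / 2 : ℝ) : ℂ) * I) (by
    rw [Matrix.mulVec_add, Matrix.mulVec_smul, h1, h2]
    ext i; simp only [Pi.add_apply, Pi.smul_apply, smul_eq_mul]
    linear_combination (((Real.pi / 2 : ℝ) : ℂ) * w i) * (I_mul_I))
  have x1 : Complex.exp (((Real.pi / 2 : ℝ) : ℂ) * I) = I := by
    push_cast; exact Complex.exp_pi_div_two_mul_I
  have x2 : Complex.exp (-((Real.pi / 2 : ℝ) : ℂ) * I) = -I := by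
    push_cast; rw [← neg_div]; exact Complex.exp_neg_pi_div_two_mul_I
  rw [x1, Matrix.mulVec_sub] at e1
  rw [x2, Matrix.mulVec_add] at e2
  ext i
  have e1 := congrFun e1 i
  have e2 := congrFun e2 i
  simp only [Pi.sub_apply, Pi.add_apply, Pi.smul_apply, smul_eq_mul] at e1 e2
  linear_combination (e1 + e2) / 2 - w i * I_mul_I

theorem exp_pi {n : Type*} [Fintype n] [DecidableEq n] (M : Matrix n n ℂ) (v w : n → ℂ)
    (h1 : M *ᵥ v = ((Real.pi : ℂ) * I) • w) (h2 : M *ᵥ w = ((Real.pi : ℂ) * I) • v) :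
    NormedSpace.exp M *ᵥ v = (-1 : ℂ) • v := by
  have e1 := exp_eig M (v + w) ((Real.pi : ℂ) * I) (by
    rw [Matrix.mulVec_add, h1, h2, smul_add, add_comm])
  have e2 := exp_eig M (v - w) (-((Real.pi : ℂ) * I)) (by
    rw [Matrix.mulVec_sub, h1, h2]
    ext i; simp only [Pi.sub_apply, Pi.smul_apply, smul_eq_mul]; ring)
  have x2 : Complex.exp (-((Real.pi : ℂ) * I)) = -1 := by
    rw [Complex.exp_neg, Complex.exp_pi_mul_I]; norm_num
  rw [Complex.exp_pi_mul_I, Matrix.mulVec_add] at e1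
  rw [x2, Matrix.mulVec_sub] at e2
  ext i
  have e1 := congrFun e1 i
  have e2 := congrFun e2 i
  simp only [Pi.sub_apply, Pi.add_apply, Pi.smul_apply, smul_eq_mul] at e1 e2 ⊢
  linear_combination (e1 + e2) / 2

theorem rt2 : ((Real.sqrt 2 : ℝ) : ℂ)⁻¹ * ((Real.sqrt 2 : ℝ) : ℂ)⁻¹ = 1 / 2 := by
  rw [← mul_inv, ← Complex.ofReal_mul, Real.mul_self_sqrt (by norm_num)]; norm_num

theorem Sz_up : Sz *ᵥ up = hole := by
  ext i; fin_cases i <;> simp [Sz, up, hole, Matrix.mulVec, dotProduct, Fin.sum_univ_three]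
theorem Sz_down : Sz *ᵥ down = 0 := by
  ext i; fin_cases i <;> simp [Sz, down, Matrix.mulVec, dotProduct, Fin.sum_univ_three]
theorem Sz_hole : Sz *ᵥ hole = up := by
  ext i; fin_cases i <;> simp [Sz, up, hole, Matrix.mulVec, dotProduct, Fin.sum_univ_three]
theorem Sx_up : Sx *ᵥ up = 0 := by
  ext i; fin_cases i <;> simp [Sx, up, Matrix.mulVec, dotProduct, Fin.sum_univ_three]
theorem Sx_down : Sx *ᵥ down = hole := by
  ext i; fin_cases i <;> simp [Sx, down, hole, Matrix.mulVec, dotProduct, Fin.sum_univ_three]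
theorem Sx_hole : Sx *ᵥ hole = down := by
  ext i; fin_cases i <;> simp [Sx, down, hole, Matrix.mulVec, dotProduct, Fin.sum_univ_three]
  linear_combination 2 * rt2
theorem Sy_up : Sy *ᵥ up = I • down := by
  ext i; fin_cases i <;> simp [Sy, up, down, Matrix.mulVec, dotProduct, Fin.sum_univ_three]
  linear_combination 2 * I * rt2
theorem Sy_down : Sy *ᵥ down = (-I) • up := by
  ext i; fin_cases i <;> simp [Sy, up, down, Matrix.mulVec, dotProduct, Fin.sum_univ_three] <;> ring
theorem sigz_up : sigz *ᵥ up = (1 : ℂ) • up := by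
  ext i; fin_cases i <;> simp [sigz, ketbra, Matrix.vecMulVec, up, down, Matrix.mulVec, dotProduct, Fin.sum_univ_three]
  · linear_combination (2 * ((Real.sqrt 2 : ℝ) : ℂ)⁻¹) * rt2
  · linear_combination (-2 * ((Real.sqrt 2 : ℝ) : ℂ)⁻¹) * rt2
theorem sigz_down : sigz *ᵥ down = (-1 : ℂ) • down := by
  ext i; fin_cases i <;> simp [sigz, ketbra, Matrix.vecMulVec, up, down, Matrix.mulVec, dotProduct, Fin.sum_univ_three]

theorem kt_pv {L : ℕ} (u v : Fin L) (huv : u < v) (s : Fin L → Bool) :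
    ktFactor u v *ᵥ pv (fun k => bv (s k)) =
      (if s u && !s v then (-1 : ℂ) else 1) • pv (fun k => bv (s k)) := by
  have hne : u ≠ v := huv.ne
  have act : ∀ φ : Fin L → Fin 3 → ℂ, (((Real.pi : ℂ) * I) • (site Sz u * site Sx v)) *ᵥ pv φ =
      ((Real.pi : ℂ) * I) •
        pv (Function.update (Function.update φ v (Sx *ᵥ φ v)) u (Sz *ᵥ φ u)) := by
    intro φ
    rw [Matrix.smul_mulVec, ← Matrix.mulVec_mulVec, site_pv, site_pv, Function.update_of_ne hne]
  unfold ktFactor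
  by_cases hu : s u = true
  · by_cases hv : s v = true
    · have := exp_eig _ (pv fun k => bv (s k)) 0 (by
        rw [act, zero_smul, pv_zero _ v, smul_zero]
        rw [Function.update_of_ne hne.symm]; simp [bv, hv, Sx_up])
      rw [this]; simp [hv]
    · have := exp_pi (((Real.pi : ℂ) * I) • (site Sz u * site Sx v)) (pv fun k => bv (s k))
        (pv (Function.update (Function.update (fun k => bv (s k)) v hole) u hole))
        (by rw [act]; simp [bv, hu, hv, Sx_down, Sz_up])
        (by
          rw [act]
          congr 2
          ext1 k
          by_cases h1 : k = u
          · subst h1; simp [bv, hu, Sz_hole]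
          · by_cases h2 : k = v
            · subst h2; simp [bv, hv, Sx_hole, h1]
            · simp [h1, h2])
      rw [this]; simp [hu, hv]
  · have := exp_eig _ (pv fun k => bv (s k)) 0 (by
      rw [act, zero_smul, pv_zero _ u, smul_zero]
      simp [bv, hu, Sz_down])
    rw [this]; simp [hu]

theorem list_eig {n α : Type*} [Fintype n] [DecidableEq n] (l : List α) (M : α → Matrix n n ℂ)
    (c : α → ℂ) (x : n → ℂ) (h : ∀ a, M a *ᵥ x = c a • x) :
    (l.map M).prod *ᵥ x = (l.map c).prod • x := by
  induction l with
  | nil => simp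
  | cons a l ih =>
    rw [List.map_cons, List.map_cons, List.prod_cons, List.prod_cons, ← Matrix.mulVec_mulVec, ih,
      Matrix.mulVec_smul, h, smul_smul, mul_comm]

def ktS {L : ℕ} (s : Fin L → Bool) : ℂ :=
  ∏ u, ∏ v, if u < v then (if s u && !s v then (-1 : ℂ) else 1) else 1

theorem UKT_pv {L : ℕ} (s : Fin L → Bool) :
    UKT L *ᵥ pv (fun k => bv (s k)) = ktS s • pv (fun k => bv (s k)) := by
  unfold UKT ktS
  simp only [Fin.prod_univ_def]
  apply list_eig
  intro u
  apply list_eig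
  intro v
  by_cases h : u < v
  · simp only [h, if_true]; exact kt_pv u v h s
  · simp [h]

theorem expSy_up {L : ℕ} (φ : Fin L → Fin 3 → ℂ) (j : Fin L) (h : φ j = up) :
    NormedSpace.exp ((-(((Real.pi / 2 : ℝ) : ℂ) * I)) • site Sy j) *ᵥ pv φ =
      pv (Function.update φ j down) := by
  apply exp_pi2
  · rw [Matrix.smul_mulVec, site_pv, h, Sy_up, pv_update_smul, smul_smul]
    congr 1
    linear_combination (-((Real.pi / 2 : ℝ) : ℂ)) * I_mul_I
  · rw [Matrix.smul_mulVec, site_pv, Function.update_self, Sy_down, Function.update_idem,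
      pv_update_smul, smul_smul, ← h, Function.update_eq_self]
    congr 1
    linear_combination (((Real.pi / 2 : ℝ) : ℂ)) * I_mul_I

theorem expSy_down {L : ℕ} (φ : Fin L → Fin 3 → ℂ) (j : Fin L) (h : φ j = down) :
    NormedSpace.exp ((-(((Real.pi / 2 : ℝ) : ℂ) * I)) • site Sy j) *ᵥ pv φ =
      pv (Function.update φ j ((-1 : ℂ) • up)) := by
  apply exp_pi2
  · rw [Matrix.smul_mulVec, site_pv, h, Sy_down, pv_update_smul, pv_update_smul, smul_smul, smul_smul]
    congr 1
    linear_combination (((Real.pi / 2 : ℝ) : ℂ)) * I_mul_I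
  · rw [Matrix.smul_mulVec, site_pv, Function.update_self, Matrix.mulVec_smul, Sy_up,
      Function.update_idem, smul_smul,
      pv_update_smul, smul_smul, ← h, Function.update_eq_self]
    congr 1
    linear_combination (((Real.pi / 2 : ℝ) : ℂ)) * I_mul_I

def bw (s : Bool) : Fin 3 → ℂ := if s then down else (-1 : ℂ) • up

theorem listSy {L : ℕ} (s : Fin L → Bool) (l : List (Fin L)) (hl : l.Nodup) :
    (l.map fun j => NormedSpace.exp ((-(((Real.pi / 2 : ℝ) : ℂ) * I)) • site Sy j)).prod *ᵥ
      pv (fun k => bv (s k)) = pv (fun k => if k ∈ l then bw (s k) else bv (s k)) := by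
  induction l with
  | nil => simp
  | cons a l ih =>
    rw [List.nodup_cons] at hl
    rw [List.map_cons, List.prod_cons, ← Matrix.mulVec_mulVec, ih hl.2]
    have key : ∀ x, x = bw (s a) → pv (Function.update (fun k => if k ∈ l then bw (s k) else bv (s k)) a x)
        = pv (fun k => if k ∈ a :: l then bw (s k) else bv (s k)) := by
      rintro x rfl
      congr 1
      ext1 k
      by_cases h : k = a
      · subst h; simp
      · simp [h]
    by_cases h : s a = true
    · rw [expSy_up _ _ (by simp [hl.1, bv, h])]
      exact key _ (by simp [bw, h])
    · rw [expSy_down _ _ (by simp [hl.1, bv, h])]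
      exact key _ (by simp [bw, h])

def dS {L : ℕ} (s : Fin L → Bool) : ℂ := ∏ k, if s k then (1 : ℂ) else -1

theorem globSy {L : ℕ} (s : Fin L → Bool) :
    globalProd L Sy (-(((Real.pi / 2 : ℝ) : ℂ) * I)) *ᵥ pv (fun k => bv (s k)) =
      dS s • pv (fun k => bv (!s k)) := by
  unfold globalProd
  rw [listSy s _ (List.nodup_finRange L)]
  ext f
  simp only [pv, dS, Pi.smul_apply, smul_eq_mul, ← Finset.prod_mul_distrib]
  apply Finset.prod_congr rfl
  intro k _
  cases h : s k <;> simp [bw, bv]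

theorem globSz {L : ℕ} (s : Fin L → Bool) :
    globalProd L sigz (-(((Real.pi / 2 : ℝ) : ℂ) * I)) *ᵥ pv (fun k => bv (s k)) =
      (∏ k, if s k then -I else I) • pv (fun k => bv (s k)) := by
  unfold globalProd
  rw [Fin.prod_univ_def]
  apply list_eig
  intro j
  have x1 : Complex.exp (((Real.pi / 2 : ℝ) : ℂ) * I) = I := by
    push_cast; exact Complex.exp_pi_div_two_mul_I
  have x2 : Complex.exp (-(((Real.pi / 2 : ℝ) : ℂ) * I)) = -I := by
    rw [Complex.exp_neg, x1, Complex.inv_I]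
  cases h : s j
  · have := exp_eig ((-(((Real.pi / 2 : ℝ) : ℂ) * I)) • site sigz j) (pv (fun k => bv (s k)))
      (((Real.pi / 2 : ℝ) : ℂ) * I) (by
        have hb : bv (s j) = down := by simp [bv, h]
        rw [Matrix.smul_mulVec, site_pv, hb, sigz_down, pv_update_smul, smul_smul, ← hb,
          Function.update_eq_self j (fun k => bv (s k))]
        congr 1; ring)
    rw [this, x1]; simp
  · have := exp_eig ((-(((Real.pi / 2 : ℝ) : ℂ) * I)) • site sigz j) (pv (fun k => bv (s k)))
      (-(((Real.pi / 2 : ℝ) : ℂ) * I)) (by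
        have hb : bv (s j) = up := by simp [bv, h]
        rw [Matrix.smul_mulVec, site_pv, hb, sigz_up, pv_update_smul, one_smul, ← hb,
          Function.update_eq_self j (fun k => bv (s k))])
    rw [this, x2]; simp

theorem scalar_id {L : ℕ} (hE : Even L) (s : Fin L → Bool) :
    ktS s * dS s * ktS (fun k => !s k) * dS (fun k => !s k) =
      (-I) ^ L * ∏ k, if s k then -I else I := by
  have hK : ktS s * ktS (fun k => !s k) = ∏ u, if s u then dS s else 1 := by
    have h2 : ktS (fun k => !s k) =
        ∏ u, ∏ v, if v < u then (if s u && !s v then (-1 : ℂ) else 1) else 1 := by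
      unfold ktS
      rw [Finset.prod_comm]
      refine Finset.prod_congr rfl fun u _ => Finset.prod_congr rfl fun v _ => ?_
      cases hu : s u <;> cases hv : s v <;> simp [hu, hv]
    rw [h2]
    unfold ktS
    rw [← Finset.prod_mul_distrib]
    refine Finset.prod_congr rfl fun u _ => ?_
    rw [← Finset.prod_mul_distrib]
    have : ∀ v, ((if u < v then (if s u && !s v then (-1 : ℂ) else 1) else 1) *
      (if v < u then (if s u && !s v then (-1 : ℂ) else 1) else 1)) =
        if s u then (if s v then 1 else -1) else 1 := by
      intro v
      rcases lt_trichotomy u v with h | h | h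
      · simp only [h, h.not_gt, if_true, if_false]; cases s u <;> cases s v <;> simp
      · subst h; cases s u <;> simp
      · simp only [h, h.not_gt, if_true, if_false]; cases s u <;> cases s v <;> simp
    simp only [this]
    cases s u <;> simp [dS]
  have hR : (-I) ^ L * ∏ k, (if s k then -I else I) = dS (fun k => !s k) := by
    have : (-I) ^ L = ∏ _k : Fin L, (-I) := by simp
    rw [this, ← Finset.prod_mul_distrib]
    unfold dS
    refine Finset.prod_congr rfl fun u _ => ?_
    cases hu : s u <;> simp [hu]
  have hdt : dS s * dS (fun k => !s k) = 1 := by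
    unfold dS
    rw [← Finset.prod_mul_distrib]
    have : ∀ k, ((if s k then (1 : ℂ) else -1) * if (!s k) then (1 : ℂ) else -1) = -1 := by
      intro k; cases s k <;> simp
    simp only [this]
    simp [hE.neg_one_pow]
  have hd : dS s = 1 ∨ dS s = -1 := by
    unfold dS
    refine Finset.prod_induction _ (fun x => x = 1 ∨ x = -1) ?_ (Or.inl rfl) ?_
    · rintro a b (rfl | rfl) (rfl | rfl) <;> simp
    · intro k _; cases s k <;> simp
  rw [hR]
  have e : ktS s * dS s * ktS (fun k => !s k) * dS (fun k => !s k) =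
    ktS s * ktS (fun k => !s k) := by
    linear_combination (ktS s * ktS (fun k => !s k)) * hdt
  rw [e, hK]
  rcases hd with h | h
  · rw [h] at hdt ⊢
    rw [one_mul] at hdt
    simp [hdt]
  · rw [h]
    unfold dS
    refine Finset.prod_congr rfl fun u _ => ?_
    cases hu : s u <;> simp [hu]

theorem Pproj_col {L : ℕ} (g : Fin L → Fin 3) :
    (fun f => Pproj L f g) =
      ∑ s : Fin L → Bool, (∏ k, star (bv (s k) (g k))) • pv (fun k => bv (s k)) := by
  ext f
  have : ∀ k, nMat (f k) (g k) = ∑ b : Bool, star (bv b (g k)) * bv b (f k) := by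
    intro k
    simp [nMat, ketbra, Matrix.vecMulVec, bv]; ring
  simp only [Pproj, Matrix.of_apply, this]
  rw [Finset.prod_univ_sum, Fintype.piFinset_univ]
  simp [pv, Finset.prod_mul_distrib]

theorem ext_P {L : ℕ} (A B : Op L)
    (h : ∀ s : Fin L → Bool, A *ᵥ pv (fun k => bv (s k)) = B *ᵥ pv (fun k => bv (s k))) :
    A * Pproj L = B * Pproj L := by
  ext f g
  have : A *ᵥ (fun f => Pproj L f g) = B *ᵥ (fun f => Pproj L f g) := by
    rw [Pproj_col, Matrix.mulVec_sum, Matrix.mulVec_sum]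
    refine Finset.sum_congr rfl fun s _ => ?_
    rw [Matrix.mulVec_smul, Matrix.mulVec_smul, h]
  exact congrFun this f

/-- For even `L`, with `Y'_π = ∏_j exp(−i(π/2)Sʸ_j)`,
`Z'_π = ∏_j exp(−i(π/2)σᶻ_j)`, and `P` the projection onto the hole-free subspace,
`P Y'_π U_KT Y'_π U_KT P = (−i)^L · P Z'_π P`. -/
theorem proj_Yprime_UKT (L : ℕ) (hL : 2 ≤ L) (hEven : Even L) :
    Pproj L * globalProd L Sy (-(((Real.pi / 2 : ℝ) : ℂ) * I)) * UKT L *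
        globalProd L Sy (-(((Real.pi / 2 : ℝ) : ℂ) * I)) * UKT L * Pproj L =
      ((-I) ^ L) •
        (Pproj L * globalProd L sigz (-(((Real.pi / 2 : ℝ) : ℂ) * I)) * Pproj L) := by
  rw [← Matrix.smul_mul]
  apply ext_P
  intro s
  simp only [← Matrix.mulVec_mulVec, Matrix.smul_mulVec]
  rw [globSz, UKT_pv]
  simp only [Matrix.mulVec_smul]
  rw [globSy]
  simp only [Matrix.mulVec_smul]
  rw [UKT_pv (fun k => !s k)]
  simp only [Matrix.mulVec_smul]
  rw [globSy (fun k => !s k)]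
  simp only [Matrix.mulVec_smul, smul_smul, Bool.not_not]
  rw [← scalar_id hEven s]
  simp only [mul_assoc]

end
end

section
/- Let L ≥ 3 and let P be the projection onto the hole-free subspace. For every bulk bond 1 ≤ j ≤ L−2 one has P U_KT σʸ_j σʸ_{j+1} U_KT P = −P σˣ_j σˣ_{j+1} P, while for the wrap-around pair one has P U_KT σʸ_L σʸ_1 U_KT P = (−1)^{L−1} P σˣ_L σˣ_1 P. -/
noncomputable section
open Complex Matrix

/-! Helper material. -/

def tens {L : ℕ} (A : Fin L → Matrix (Fin 3) (Fin 3) ℂ) : Op L :=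
  Matrix.of fun f g => ∏ k : Fin L, A k (f k) (g k)

theorem tens_mul {L : ℕ} (A B : Fin L → Matrix (Fin 3) (Fin 3) ℂ) :
    tens A * tens B = tens (fun k => A k * B k) := by
  ext f g
  simp only [tens, Matrix.mul_apply, Matrix.of_apply, ← Finset.prod_mul_distrib]
  rw [Finset.prod_univ_sum]
  simp

theorem tens_one {L : ℕ} : tens (fun _ : Fin L => (1 : Matrix (Fin 3) (Fin 3) ℂ)) = 1 := by
  ext f g
  simp only [tens, Matrix.of_apply, Matrix.one_apply]
  by_cases h : f = g
  · simp [h]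
  · rw [if_neg h]
    obtain ⟨k, hk⟩ := Function.ne_iff.mp h
    exact Finset.prod_eq_zero (Finset.mem_univ k) (by simp [hk])

theorem site_eq {L : ℕ} (A : Matrix (Fin 3) (Fin 3) ℂ) (j : Fin L) :
    site A j = tens (fun k => if k = j then A else 1) := by
  ext f g
  simp only [site, tens, Matrix.of_apply]
  refine Finset.prod_congr rfl fun k _ => ?_
  by_cases h : k = j
  · simp [h]
  · simp [h, Matrix.one_apply]

theorem site_comm {L : ℕ} (A B : Matrix (Fin 3) (Fin 3) ℂ) {j k : Fin L} (h : j ≠ k) :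
    site A j * site B k = site B k * site A j := by
  rw [site_eq, site_eq, tens_mul, tens_mul]
  congr 1; funext m
  by_cases h1 : m = j
  · have : m ≠ k := by rw [h1]; exact h
    simp [h1, h]
  · simp [h1]

theorem site_mul {L : ℕ} (A B : Matrix (Fin 3) (Fin 3) ℂ) (j : Fin L) :
    site A j * site B j = site (A * B) j := by
  rw [site_eq, site_eq, site_eq, tens_mul]
  congr 1; funext m
  split_ifs <;> simp

theorem pair_eq {L : ℕ} (A B : Matrix (Fin 3) (Fin 3) ℂ) {j k : Fin L} (h : j ≠ k) :
    site A j * site B k = tens (fun m => if m = j then A else if m = k then B else 1) := by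
  rw [site_eq, site_eq, tens_mul]
  congr 1; funext m
  by_cases h1 : m = j
  · simp [h1, h]
  · simp [h1]

theorem sq2 : (((Real.sqrt 2 : ℝ) : ℂ)⁻¹) * ((Real.sqrt 2 : ℝ) : ℂ)⁻¹ = 1 / 2 := by
  rw [← mul_inv, ← Complex.ofReal_mul, Real.mul_self_sqrt (by norm_num)]
  norm_num

theorem exp_cube {L : ℕ} (M : Op L) (hM : M ^ 3 = M) :
    NormedSpace.exp (((Real.pi : ℂ) * I) • M) = 1 - (2 : ℂ) • M ^ 2 := by
  let _ : NormedRing (Op L) := Matrix.linftyOpNormedRing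
  let _ : NormedAlgebra ℂ (Op L) := Matrix.linftyOpNormedAlgebra
  set c : ℂ := (Real.pi : ℂ) * I with hc
  set p : Op L := (1 / 2 : ℂ) • (M ^ 2 + M) with hp
  set q : Op L := (1 / 2 : ℂ) • (M ^ 2 - M) with hq
  have hpow : ∀ n : ℕ, M ^ (n + 1) = p + ((-1 : ℂ) ^ (n + 1)) • q := by
    intro n
    induction n with
    | zero => rw [hp, hq]; simp; module
    | succ n ih =>
      have h4 : M * M = M ^ 2 := (sq M).symm
      have h3 : M ^ 2 * M = M := by rw [← pow_succ]; exact hM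
      rw [pow_succ, ih, hp, hq, pow_succ (-1 : ℂ) (n + 1)]
      simp only [add_mul, smul_mul_assoc, sub_mul, h3, h4]
      module
  have e1 : HasSum (fun n : ℕ => ((n.factorial : ℂ)⁻¹ * c ^ n) ) (NormedSpace.exp c) := by
    simpa using NormedSpace.exp_series_hasSum_exp' (𝕂 := ℂ) c
  have e2 : HasSum (fun n : ℕ => ((n.factorial : ℂ)⁻¹ * (-c) ^ n) ) (NormedSpace.exp (-c)) := by
    simpa using NormedSpace.exp_series_hasSum_exp' (𝕂 := ℂ) (-c)
  have e3 : HasSum (fun n : ℕ => if n = 0 then (1 - p - q : Op L) else 0) (1 - p - q) :=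
    hasSum_ite_eq 0 _
  have e4 := ((e1.smul_const p).add (e2.smul_const q)).add e3
  have e5 : HasSum (fun n : ℕ => ((n.factorial : ℂ)⁻¹) • (c • M) ^ n) (NormedSpace.exp (c • M)) :=
    NormedSpace.exp_series_hasSum_exp' (𝕂 := ℂ) (c • M)
  have e6 := e5.unique (a₂ := NormedSpace.exp c • p + NormedSpace.exp (-c) • q + (1 - p - q)) (by
    convert e4 using 1
    funext n
    cases n with
    | zero => simp
    | succ n =>
      rw [smul_pow, hpow]
      simp only [Nat.add_eq_zero_iff, one_ne_zero, and_false, if_false, add_zero]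
      rw [neg_pow c]
      module)
  have x1 : NormedSpace.exp c = -1 := by
    rw [← Complex.exp_eq_exp_ℂ, hc, Complex.exp_pi_mul_I]
  have x2 : NormedSpace.exp (-c) = -1 := by
    rw [← Complex.exp_eq_exp_ℂ, hc, Complex.exp_neg, Complex.exp_pi_mul_I]; norm_num
  rw [x1, x2] at e6
  refine e6.trans ?_
  rw [hp, hq]
  module

theorem Sx_cube : Sx * Sx * Sx = Sx := by
  have h := sq2
  have h3 : ((Real.sqrt 2 : ℝ) : ℂ)⁻¹ * ((Real.sqrt 2 : ℝ) : ℂ)⁻¹ * ((Real.sqrt 2 : ℝ) : ℂ)⁻¹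
    = 1 / 2 * ((Real.sqrt 2 : ℝ) : ℂ)⁻¹ := by rw [h]
  simp only [Sx]
  generalize ((Real.sqrt 2 : ℝ) : ℂ)⁻¹ = s at *
  ext i j
  fin_cases i <;> fin_cases j <;> simp [Matrix.mul_apply, Fin.sum_univ_three] <;>
    linear_combination 2 * h3

theorem Sz_cube : Sz * Sz * Sz = Sz := by
  ext i j
  fin_cases i <;> fin_cases j <;> simp [Sz, Matrix.mul_apply, Fin.sum_univ_three]

theorem ktFactor_eq {L : ℕ} {u v : Fin L} (h : u ≠ v) :
    ktFactor u v = 1 - (2 : ℂ) • (site (Sz * Sz) u * site (Sx * Sx) v) := by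
  have h2 : (site Sz u * site Sx v) ^ 2 = site (Sz * Sz) u * site (Sx * Sx) v := by
    rw [← site_mul, ← site_mul, sq, mul_assoc, ← mul_assoc (site Sx v), ← site_comm Sz Sx h]
    simp only [mul_assoc]
  have h3 : (site Sz u * site Sx v) ^ 3 = site Sz u * site Sx v := by
    rw [pow_succ, h2, mul_assoc, ← mul_assoc (site (Sx * Sx) v), ← site_comm Sz (Sx * Sx) h,
      mul_assoc, site_mul, ← mul_assoc, site_mul, Sx_cube, Sz_cube]
  rw [ktFactor, exp_cube _ h3, h2]

def Wm : Matrix (Fin 3) (Fin 3) ℂ :=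
  !![((Real.sqrt 2 : ℝ) : ℂ)⁻¹, 0, ((Real.sqrt 2 : ℝ) : ℂ)⁻¹; 0, 1, 0;
    -((Real.sqrt 2 : ℝ) : ℂ)⁻¹, 0, ((Real.sqrt 2 : ℝ) : ℂ)⁻¹]

theorem W1 : Wmᵀ * Wm = 1 := by
  have h := sq2
  simp only [Wm]
  generalize ((Real.sqrt 2 : ℝ) : ℂ)⁻¹ = s at *
  ext i j
  fin_cases i <;> fin_cases j <;> simp [Matrix.mul_apply, Fin.sum_univ_three] <;>
    linear_combination 2 * h

theorem W2 : Wm * Wmᵀ = 1 := mul_eq_one_comm.mp W1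

def cj (A : Matrix (Fin 3) (Fin 3) ℂ) : Matrix (Fin 3) (Fin 3) ℂ := Wmᵀ * A * Wm

theorem cj_one : cj 1 = 1 := by simp [cj, W1]

theorem ketbra_apply (a b : Fin 3 → ℂ) (i j : Fin 3) :
    ketbra a b i j = a i * (starRingEnd ℂ) (b j) := rfl

theorem cj_sigx : cj sigx = !![0, 1, 0; 1, 0, 0; 0, 0, 0] := by
  have h := sq2
  have hs : (starRingEnd ℂ) ((Real.sqrt 2 : ℝ) : ℂ)⁻¹ = ((Real.sqrt 2 : ℝ) : ℂ)⁻¹ := by simp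
  simp only [cj, Wm, sigx, up, down]
  generalize ((Real.sqrt 2 : ℝ) : ℂ)⁻¹ = s at *
  ext i j
  fin_cases i <;> fin_cases j <;>
    simp [Matrix.mul_apply, Fin.sum_univ_three, ketbra_apply, hs] <;>
    linear_combination 2 * h

theorem cj_sigy : cj sigy = !![0, -I, 0; I, 0, 0; 0, 0, 0] := by
  have h := sq2
  have hs : (starRingEnd ℂ) ((Real.sqrt 2 : ℝ) : ℂ)⁻¹ = ((Real.sqrt 2 : ℝ) : ℂ)⁻¹ := by simp
  simp only [cj, Wm, sigy, up, down]
  generalize ((Real.sqrt 2 : ℝ) : ℂ)⁻¹ = s at *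
  ext i j
  fin_cases i <;> fin_cases j <;>
    simp [Matrix.mul_apply, Fin.sum_univ_three, ketbra_apply, hs] <;>
    first | linear_combination 2 * I * h | linear_combination (-2) * I * h | ring

theorem cj_n : cj nMat = Matrix.diagonal (fun x => if x = 2 then 0 else 1) := by
  have h := sq2
  have hs : (starRingEnd ℂ) ((Real.sqrt 2 : ℝ) : ℂ)⁻¹ = ((Real.sqrt 2 : ℝ) : ℂ)⁻¹ := by simp
  simp only [cj, Wm, nMat, up, down]
  generalize ((Real.sqrt 2 : ℝ) : ℂ)⁻¹ = s at *
  ext i j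
  fin_cases i <;> fin_cases j <;>
    simp [Matrix.mul_apply, Fin.sum_univ_three, ketbra_apply, hs] <;>
    first | linear_combination (4 * s * s + 2) * h | ring

theorem cj_Sz2 : cj (Sz * Sz) = Matrix.diagonal (fun x => if x = 1 then 0 else 1) := by
  have h := sq2
  simp only [cj, Wm, Sz]
  generalize ((Real.sqrt 2 : ℝ) : ℂ)⁻¹ = s at *
  ext i j
  fin_cases i <;> fin_cases j <;>
    simp [Matrix.mul_apply, Fin.sum_univ_three] <;>
    linear_combination 2 * h

theorem cj_Sx2 : cj (Sx * Sx) = Matrix.diagonal (fun x => if x = 0 then 0 else 1) := by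
  have h := sq2
  simp only [cj, Wm, Sx]
  generalize ((Real.sqrt 2 : ℝ) : ℂ)⁻¹ = s at *
  ext i j
  fin_cases i <;> fin_cases j <;>
    simp [Matrix.mul_apply, Fin.sum_univ_three] <;>
    first | linear_combination (4 * s * s + 2) * h | linear_combination 2 * h | ring

def phi (L : ℕ) : Op L →* Op L where
  toFun X := tens (fun _ => Wmᵀ) * X * tens (fun _ => Wm)
  map_one' := by rw [mul_one, tens_mul]; simp only [W1]; exact tens_one
  map_mul' X Y := by
    have h : tens (fun _ : Fin L => Wm) * tens (fun _ => Wmᵀ) = 1 := by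
      rw [tens_mul]; simp only [W2]; exact tens_one
    calc _ = tens (fun _ => Wmᵀ) * X * 1 * Y * tens (fun _ => Wm) := by simp only [mul_assoc, one_mul]
      _ = _ := by rw [← h]; simp only [mul_assoc]

theorem phi_def {L : ℕ} (X : Op L) :
    phi L X = tens (fun _ => Wmᵀ) * X * tens (fun _ => Wm) := rfl

theorem phi_inj {L : ℕ} {X Y : Op L} (h : phi L X = phi L Y) : X = Y := by
  have h1 : tens (fun _ : Fin L => Wm) * tens (fun _ => Wmᵀ) = 1 := by
    rw [tens_mul]; simp only [W2]; exact tens_one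
  have key : ∀ Z : Op L, tens (fun _ => Wm) * phi L Z * tens (fun _ => Wmᵀ) = Z := by
    intro Z
    rw [phi_def]
    calc _ = (tens (fun _ : Fin L => Wm) * tens (fun _ => Wmᵀ)) * Z *
          (tens (fun _ : Fin L => Wm) * tens (fun _ => Wmᵀ)) := by simp only [mul_assoc]
      _ = Z := by rw [h1]; simp
  rw [← key X, h, key]

theorem phi_smul {L : ℕ} (c : ℂ) (X : Op L) : phi L (c • X) = c • phi L X := by
  simp [phi_def]

theorem phi_sub {L : ℕ} (X Y : Op L) : phi L (X - Y) = phi L X - phi L Y := by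
  simp [phi_def, mul_sub, sub_mul]

theorem phi_tens {L : ℕ} (A : Fin L → Matrix (Fin 3) (Fin 3) ℂ) :
    phi L (tens A) = tens (fun k => cj (A k)) := by
  rw [phi_def, tens_mul, tens_mul]; rfl

theorem phi_site {L : ℕ} (A : Matrix (Fin 3) (Fin 3) ℂ) (j : Fin L) :
    phi L (site A j) = site (cj A) j := by
  rw [site_eq, phi_tens, site_eq]
  congr 1; funext k
  split_ifs
  · rfl
  · exact cj_one

theorem site_diag {L : ℕ} (d : Fin 3 → ℂ) (j : Fin L) :
    site (Matrix.diagonal d) j = Matrix.diagonal (fun a : Fin L → Fin 3 => d (a j)) := by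
  ext f g
  rw [site, Matrix.of_apply]
  by_cases h : f = g
  · subst h
    simp
  · rw [Matrix.diagonal_apply_ne _ h]
    obtain ⟨k, hk⟩ := Function.ne_iff.mp h
    refine Finset.prod_eq_zero (Finset.mem_univ k) ?_
    simp [hk]

theorem phi_P {L : ℕ} : phi L (Pproj L) =
    Matrix.diagonal (fun a : Fin L → Fin 3 => ∏ k, if a k = 2 then (0 : ℂ) else 1) := by
  have : Pproj L = tens (fun _ => nMat) := rfl
  rw [this, phi_tens]
  simp only [cj_n]
  ext f g
  rw [tens, Matrix.of_apply]
  by_cases h : f = g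
  · subst h
    simp
  · rw [Matrix.diagonal_apply_ne _ h]
    obtain ⟨k, hk⟩ := Function.ne_iff.mp h
    refine Finset.prod_eq_zero (Finset.mem_univ k) ?_
    simp [hk]

def cs (x y : Fin 3) : ℤ := if x ≠ 1 ∧ y ≠ 0 then -1 else 1

theorem phi_kt {L : ℕ} {u v : Fin L} (h : u ≠ v) : phi L (ktFactor u v) =
    Matrix.diagonal (fun a : Fin L → Fin 3 => (cs (a u) (a v) : ℂ)) := by
  rw [ktFactor_eq h, phi_sub, phi_smul, map_mul, map_one, phi_site, phi_site, cj_Sz2, cj_Sx2,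
    site_diag, site_diag, Matrix.diagonal_mul_diagonal, ← Matrix.diagonal_one,
    ← Matrix.diagonal_smul, Matrix.diagonal_sub]
  congr 1; funext a
  simp only [Pi.smul_apply, smul_eq_mul, cs]
  by_cases h1 : a u = 1 <;> by_cases h2 : a v = 0 <;> simp [h1, h2]
  norm_num

def sg {L : ℕ} (a : Fin L → Fin 3) : ℤ := ∏ u, ∏ v, if u < v then cs (a u) (a v) else 1

theorem phi_UKT {L : ℕ} : phi L (UKT L) =
    Matrix.diagonal (fun a : Fin L → Fin 3 => (sg a : ℂ)) := by
  have key : ∀ u v : Fin L, phi L (if u < v then ktFactor u v else 1) =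
      Matrix.diagonalRingHom (Fin L → Fin 3) ℂ
        (fun a => ((if u < v then cs (a u) (a v) else 1 : ℤ) : ℂ)) := by
    intro u v
    split_ifs with h
    · rw [phi_kt h.ne]; rfl
    · rw [map_one]; symm; simpa using map_one (Matrix.diagonalRingHom (Fin L → Fin 3) ℂ)
  have : phi L (UKT L) = Matrix.diagonalRingHom (Fin L → Fin 3) ℂ
      (∏ u, ∏ v, fun a => ((if u < v then cs (a u) (a v) else 1 : ℤ) : ℂ)) := by
    rw [UKT, map_list_prod, List.map_map, Fin.prod_univ_def, map_list_prod, List.map_map]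
    congr 2; funext u
    simp only [Function.comp]
    rw [map_list_prod, List.map_map, Fin.prod_univ_def, map_list_prod, List.map_map]
    congr 2; funext v
    exact key u v
  rw [this]
  show Matrix.diagonal _ = _
  congr 1; funext a
  simp [sg, Finset.prod_apply]

theorem prod_pairs {L : ℕ} (g : Fin L → Fin L → ℤ) {j k : Fin L} (hjk : j ≠ k)
    (h1 : ∀ u v, u ≠ j → u ≠ k → v ≠ j → v ≠ k → g u v = 1) :
    ∏ u, ∏ v, g u v = (g j j * g j k * (g k j * g k k)) *
      ∏ u ∈ (Finset.univ.erase j).erase k, (g j u * g k u * (g u j * g u k)) := by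
  have split : ∀ f : Fin L → ℤ, ∏ u, f u =
      f j * (f k * ∏ u ∈ (Finset.univ.erase j).erase k, f u) := by
    intro f
    rw [Finset.mul_prod_erase _ _ (by simp [hjk.symm]), Finset.mul_prod_erase _ _ (by simp)]
  rw [split, split (g j), split (g k)]
  have : ∏ u ∈ (Finset.univ.erase j).erase k, ∏ v, g u v =
      ∏ u ∈ (Finset.univ.erase j).erase k, (g u j * g u k) := by
    refine Finset.prod_congr rfl fun u hu => ?_
    simp only [Finset.mem_erase, Finset.mem_univ, and_true] at hu
    rw [split, Finset.prod_eq_one, mul_one]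
    intro v hv
    simp only [Finset.mem_erase, Finset.mem_univ, and_true] at hv
    exact h1 u v hu.2 hu.1 hv.2 hv.1
  rw [this]
  simp only [Finset.prod_mul_distrib]
  ring

theorem cs_sq : ∀ x y, cs x y * cs x y = 1 := by decide
theorem cs_l : ∀ u x x' y y' : Fin 3, u ≠ 2 → x ≠ 2 → x' ≠ 2 → y ≠ 2 → y' ≠ 2 → x ≠ x' → y ≠ y' →
    (cs u x * cs u x') * (cs u y * cs u y') = 1 := by decide
theorem cs_r : ∀ u x x' y y' : Fin 3, u ≠ 2 → x ≠ 2 → x' ≠ 2 → y ≠ 2 → y' ≠ 2 → x ≠ x' → y ≠ y' →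
    (cs x u * cs x' u) * (cs y u * cs y' u) = 1 := by decide
theorem cs_m : ∀ u x x' y y' : Fin 3, u ≠ 2 → x ≠ 2 → x' ≠ 2 → y ≠ 2 → y' ≠ 2 → x ≠ x' → y ≠ y' →
    (cs x u * cs x' u) * (cs u y * cs u y') = -1 := by decide

theorem sg_mul {L : ℕ} {j k : Fin L} (hjk : j < k) (ε : ℤ)
    (H : (ε = 1 ∧ ∀ u, u ≠ j → u ≠ k → u < j ∨ k < u) ∨
      (ε = -1 ∧ ∀ u, u ≠ j → u ≠ k → j < u ∧ u < k))
    (a b : Fin L → Fin 3) (ha : ∀ u, a u ≠ 2) (hb : ∀ u, b u ≠ 2)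
    (hab : ∀ u, u ≠ j → u ≠ k → a u = b u) (hj : a j ≠ b j) (hk : a k ≠ b k) :
    sg a * sg b = (cs (a j) (a k) * cs (b j) (b k)) * ε ^ (L - 2) := by
  have e : sg a * sg b = ∏ u, ∏ v, if u < v then cs (a u) (a v) * cs (b u) (b v) else 1 := by
    simp only [sg, ← Finset.prod_mul_distrib]
    refine Finset.prod_congr rfl fun u _ => Finset.prod_congr rfl fun v _ => ?_
    split_ifs <;> simp
  rw [e, prod_pairs _ hjk.ne]
  · simp only [lt_irrefl, if_false, if_pos hjk, if_neg hjk.asymm, one_mul, mul_one]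
    congr 1
    have hcard : ((Finset.univ.erase j).erase k : Finset (Fin L)).card = L - 2 := by
      rw [Finset.card_erase_of_mem (by simp [hjk.ne']), Finset.card_erase_of_mem (by simp)]
      simp; omega
    rw [← hcard]
    refine Finset.prod_eq_pow_card fun u hu => ?_
    simp only [Finset.mem_erase, Finset.mem_univ, and_true] at hu
    have hu' := hab u hu.2 hu.1
    rcases H with ⟨rfl, H⟩ | ⟨rfl, H⟩
    · rcases H u hu.2 hu.1 with h | h
      · have h2 := h.trans hjk
        simp only [if_pos h, if_pos h2, if_neg h.asymm, if_neg h2.asymm, one_mul, ← hu']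
        exact cs_l _ _ _ _ _ (ha u) (ha j) (hb j) (ha k) (hb k) hj hk
      · have h2 := hjk.trans h
        simp only [if_pos h, if_pos h2, if_neg h.asymm, if_neg h2.asymm, mul_one, ← hu']
        exact cs_r _ _ _ _ _ (ha u) (ha j) (hb j) (ha k) (hb k) hj hk
    · obtain ⟨h, h2⟩ := H u hu.2 hu.1
      simp only [if_pos h, if_pos h2, if_neg h.asymm, if_neg h2.asymm, one_mul, mul_one, ← hu']
      exact cs_m _ _ _ _ _ (ha u) (ha j) (hb j) (ha k) (hb k) hj hk
  · intro u v h1 h2 h3 h4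
    rw [← hab u h1 h2, ← hab v h3 h4, cs_sq]
    simp

theorem local_id (x x' y y' : Fin 3) :
    (cj sigy x x' * cj sigy y y' = 0 ∧ cj sigx x x' * cj sigx y y' = 0) ∨
    ((x ≠ x' ∧ y ≠ y') ∧ cj sigy x x' * cj sigy y y' * ((cs x y * cs x' y' : ℤ) : ℂ) =
      - (cj sigx x x' * cj sigx y y')) := by
  rw [cj_sigy, cj_sigx]
  fin_cases x <;> fin_cases x' <;> fin_cases y <;> fin_cases y' <;> simp [cs]

theorem pair_apply_zero {L : ℕ} (A : Matrix (Fin 3) (Fin 3) ℂ) {j k : Fin L} (hjk : j ≠ k)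
    (a b : Fin L → Fin 3) (h : ∃ u, u ≠ j ∧ u ≠ k ∧ a u ≠ b u) :
    (site A j * site A k) a b = 0 := by
  rw [pair_eq _ _ hjk, tens, Matrix.of_apply]
  obtain ⟨u, h1, h2, h3⟩ := h
  refine Finset.prod_eq_zero (Finset.mem_univ u) ?_
  simp [h1, h2, h3]

theorem pair_apply {L : ℕ} (A : Matrix (Fin 3) (Fin 3) ℂ) {j k : Fin L} (hjk : j ≠ k)
    (a b : Fin L → Fin 3) (h : ∀ u, u ≠ j → u ≠ k → a u = b u) :
    (site A j * site A k) a b = A (a j) (b j) * A (a k) (b k) := by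
  rw [pair_eq _ _ hjk, tens, Matrix.of_apply,
    ← Finset.mul_prod_erase _ _ (Finset.mem_univ j),
    ← Finset.mul_prod_erase _ _ (show k ∈ Finset.univ.erase j by simp [hjk.symm]),
    Finset.prod_eq_one]
  · simp [hjk.symm]
  · intro u hu
    simp only [Finset.mem_erase, Finset.mem_univ, and_true] at hu
    rw [if_neg hu.2, if_neg hu.1, h u hu.2 hu.1, Matrix.one_apply_eq]

theorem core {L : ℕ} {j k : Fin L} (hjk : j < k) (ε : ℤ)
    (H : (ε = 1 ∧ ∀ u, u ≠ j → u ≠ k → u < j ∨ k < u) ∨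
      (ε = -1 ∧ ∀ u, u ≠ j → u ≠ k → j < u ∧ u < k)) :
    Pproj L * (UKT L * (site sigy j * site sigy k) * UKT L) * Pproj L =
      (-(ε : ℂ) ^ (L - 2)) • (Pproj L * (site sigx j * site sigx k) * Pproj L) := by
  apply phi_inj
  rw [phi_smul]
  simp only [map_mul, phi_UKT, phi_P, phi_site]
  ext a b
  simp only [Matrix.smul_apply, Matrix.mul_diagonal, Matrix.diagonal_mul, smul_eq_mul]
  by_cases ha : ∃ u, a u = 2
  · obtain ⟨u, hu⟩ := ha
    rw [Finset.prod_eq_zero (Finset.mem_univ u) (by simp [hu])]; simp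
  by_cases hb : ∃ u, b u = 2
  · obtain ⟨u, hu⟩ := hb
    rw [Finset.prod_eq_zero (f := fun k => if b k = 2 then (0 : ℂ) else 1)
      (Finset.mem_univ u) (by simp [hu])]; simp
  by_cases hab : ∃ u, u ≠ j ∧ u ≠ k ∧ a u ≠ b u
  · rw [pair_apply_zero _ hjk.ne _ _ hab, pair_apply_zero _ hjk.ne _ _ hab]; simp
  push Not at ha hb hab
  rw [pair_apply _ hjk.ne _ _ hab, pair_apply _ hjk.ne _ _ hab]
  rcases local_id (a j) (b j) (a k) (b k) with ⟨h1, h2⟩ | ⟨⟨h1, h2⟩, h3⟩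
  · rw [h1, h2]; simp
  · have h4 := congrArg (Int.cast (R := ℂ)) (sg_mul hjk ε H a b ha hb hab h1 h2)
    push_cast at h4 h3
    linear_combination (∏ k, if a k = 2 then (0 : ℂ) else 1) *
      (∏ k, if b k = 2 then (0 : ℂ) else 1) *
      (cj sigy (a j) (b j) * cj sigy (a k) (b k) * h4 + (ε : ℂ) ^ (L - 2) * h3)

/-- For every bulk bond (1-based `1 ≤ j ≤ L−2`, here 0-based `j` with
`j+2 < L`), `P U_KT σʸ_j σʸ_{j+1} U_KT P = −P σˣ_j σˣ_{j+1} P`, while for the wrap-around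
pair `P U_KT σʸ_L σʸ_1 U_KT P = (−1)^{L−1} P σˣ_L σˣ_1 P`. -/
theorem UKT_sigy_sigx_duality (L : ℕ) (hL : 3 ≤ L) :
    (∀ j : ℕ, ∀ hj : j + 2 < L,
        Pproj L * (UKT L * (site sigy ⟨j, by omega⟩ * site sigy ⟨j + 1, by omega⟩) * UKT L) *
            Pproj L =
          -(Pproj L * (site sigx ⟨j, by omega⟩ * site sigx ⟨j + 1, by omega⟩) * Pproj L)) ∧
      Pproj L * (UKT L * (site sigy ⟨L - 1, by omega⟩ * site sigy ⟨0, by omega⟩) * UKT L) *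
          Pproj L =
        ((-1 : ℂ) ^ (L - 1)) •
          (Pproj L * (site sigx ⟨L - 1, by omega⟩ * site sigx ⟨0, by omega⟩) * Pproj L) := by
  constructor
  · intro j hj
    have := core (L := L) (j := ⟨j, by omega⟩) (k := ⟨j + 1, by omega⟩)
      (by simp [Fin.lt_def]) 1 (Or.inl ⟨rfl, fun u h1 h2 => by
        simp only [ne_eq, Fin.ext_iff, Fin.lt_def] at *; omega⟩)
    rw [this]
    simp
  · have := core (L := L) (j := ⟨0, by omega⟩) (k := ⟨L - 1, by omega⟩)
      (by simp only [Fin.lt_def]; omega) (-1) (Or.inr ⟨rfl, fun u h1 h2 => by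
        have := u.2
        simp only [ne_eq, Fin.ext_iff, Fin.lt_def] at *; omega⟩)
    have hne : (⟨L - 1, by omega⟩ : Fin L) ≠ ⟨0, by omega⟩ := by
      simp only [ne_eq, Fin.ext_iff]; omega
    rw [site_comm sigy sigy hne, site_comm sigx sigx hne, this]
    congr 1
    obtain ⟨m, rfl⟩ : ∃ m, L = m + 3 := ⟨L - 3, by omega⟩
    simp [pow_succ]

end
end
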